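/- Let u(x) = u_0 + u_1 x + ... + u_m x^m be a polynomial over the p-adic field Q_p with u_0 u_m ≠ 0. If the Newton polygon of u has a segment from (r, ν_p(u_r)) to (s, ν_p(u_s)) with r < s and slope −k, then u has exactly s − r roots α_1, ..., α_{s−r} in an algebraic closure of Q_p, counted with multiplicity, each with valuation ν_p(α_i) = k, and the polynomial Π_{i=1}^{s−r}(x − α_i) has coefficients in Q_p. -/

import Mathlib

open Polynomial in
/-- The p-adic valuation of a nonzero algebraic element over ℚ_p, computed from its
minimal polynomial: ν(α) = ν_p(constant coefficient of minpoly) / deg(minpoly). -/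
noncomputable def algClosurePadicVal (p : ℕ) [Fact p.Prime]
    (α : AlgebraicClosure ℚ_[p]) : ℚ :=
  (((minpoly ℚ_[p] α).coeff 0).valuation : ℚ) / ((minpoly ℚ_[p] α).natDegree : ℚ)

open Polynomial

section NewtonSegment

/-- The weighted sizes `‖f_i‖ * c ^ i` of the coefficients of `f` have maximum `G > 0`, whose first
and last occurrences are at `i = a` and at `i = b`. -/
structure IsNewtonSegment {L : Type*} [NormedField L] (c : ℝ) (f : L[X]) (a b : ℕ) (G : ℝ) :
    Prop where
  pos : 0 < G
  le : ∀ i, ‖f.coeff i‖ * c ^ i ≤ G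
  left_eq : ‖f.coeff a‖ * c ^ a = G
  right_eq : ‖f.coeff b‖ * c ^ b = G
  lt_of_lt_left : ∀ i < a, ‖f.coeff i‖ * c ^ i < G
  lt_of_right_lt : ∀ i, b < i → ‖f.coeff i‖ * c ^ i < G

variable {L : Type*} [NormedField L] {c : ℝ} {f : L[X]} {a b a' b' : ℕ} {G G' : ℝ}

theorem IsNewtonSegment.unique (h : IsNewtonSegment c f a b G)
    (h' : IsNewtonSegment c f a' b' G') : a = a' ∧ b = b' := by
  obtain rfl : G = G' :=
    le_antisymm (h.left_eq ▸ h'.le a) (h'.left_eq ▸ h.le a')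
  refine ⟨le_antisymm ?_ ?_, le_antisymm ?_ ?_⟩ <;> by_contra! hlt
  · exact (h.lt_of_lt_left _ hlt).ne h'.left_eq
  · exact (h'.lt_of_lt_left _ hlt).ne h.left_eq
  · exact (h'.lt_of_right_lt _ hlt).ne h.right_eq
  · exact (h.lt_of_right_lt _ hlt).ne h'.right_eq

theorem isNewtonSegment_C (c : ℝ) {x : L} (hx : x ≠ 0) :
    IsNewtonSegment c (C x) 0 0 ‖x‖ where
  pos := norm_pos_iff.2 hx
  le i := by cases i <;> simp [coeff_C]
  left_eq := by simp
  right_eq := by simp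
  lt_of_lt_left i hi := by omega
  lt_of_right_lt i hi := by simp [coeff_C, hi.ne', hx]

theorem weighted_norm_coeff_X_sub_C_mul_zero (c : ℝ) (f : L[X]) (α : L) :
    ‖((X - C α) * f).coeff 0‖ * c ^ 0 = ‖α‖ * (‖f.coeff 0‖ * c ^ 0) := by
  simp [mul_coeff_zero]

section Ultrametric

variable [IsUltrametricDist L]

theorem weighted_norm_coeff_X_sub_C_mul_succ_le (hc : 0 < c) (f : L[X]) (α : L) (i : ℕ) :
    ‖((X - C α) * f).coeff (i + 1)‖ * c ^ (i + 1) ≤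
      max (c * (‖f.coeff i‖ * c ^ i)) (‖α‖ * (‖f.coeff (i + 1)‖ * c ^ (i + 1))) := by
  have h := IsUltrametricDist.norm_add_le_max (f.coeff i) (-(α * f.coeff (i + 1)))
  have hp : 0 ≤ c ^ (i + 1) := by positivity
  rw [sub_mul, coeff_sub, coeff_X_mul, coeff_C_mul, sub_eq_add_neg]
  refine (mul_le_mul_of_nonneg_right h hp).trans_eq ?_
  rw [max_mul_of_nonneg _ _ hp, norm_neg, norm_mul]
  congr 1 <;> ring

theorem weighted_norm_coeff_X_sub_C_mul_succ_eq (hc : 0 < c) (f : L[X]) (α : L) (i : ℕ)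
    (hne : c * (‖f.coeff i‖ * c ^ i) ≠ ‖α‖ * (‖f.coeff (i + 1)‖ * c ^ (i + 1))) :
    ‖((X - C α) * f).coeff (i + 1)‖ * c ^ (i + 1) =
      max (c * (‖f.coeff i‖ * c ^ i)) (‖α‖ * (‖f.coeff (i + 1)‖ * c ^ (i + 1))) := by
  have hp : 0 ≤ c ^ (i + 1) := by positivity
  have hne' : ‖f.coeff i‖ ≠ ‖-(α * f.coeff (i + 1))‖ := by
    rw [norm_neg, norm_mul]
    intro h
    exact hne (by rw [h]; ring)
  have h := IsUltrametricDist.norm_add_eq_max_of_norm_ne_norm hne'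
  rw [sub_mul, coeff_sub, coeff_X_mul, coeff_C_mul, sub_eq_add_neg, h,
    max_mul_of_nonneg _ _ hp, norm_neg, norm_mul]
  congr 1 <;> ring

theorem IsNewtonSegment.X_sub_C_mul_of_norm_eq (hc : 0 < c) (h : IsNewtonSegment c f a b G)
    {α : L} (hα : ‖α‖ = c) : IsNewtonSegment c ((X - C α) * f) a (b + 1) (c * G) where
  pos := mul_pos hc h.pos
  le i := by
    cases i with
    | zero =>
      rw [weighted_norm_coeff_X_sub_C_mul_zero, hα]
      exact mul_le_mul_of_nonneg_left (h.le 0) hc.le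
    | succ i =>
      refine (weighted_norm_coeff_X_sub_C_mul_succ_le hc f α i).trans (max_le ?_ ?_)
      · exact mul_le_mul_of_nonneg_left (h.le i) hc.le
      · rw [hα]; exact mul_le_mul_of_nonneg_left (h.le _) hc.le
  left_eq := by
    cases a with
    | zero => rw [weighted_norm_coeff_X_sub_C_mul_zero, hα, h.left_eq]
    | succ a =>
      have h1 := mul_lt_mul_of_pos_left (h.lt_of_lt_left a a.lt_succ_self) hc
      rw [weighted_norm_coeff_X_sub_C_mul_succ_eq hc f α a, hα, h.left_eq, max_eq_right h1.le]
      rw [hα, h.left_eq]; exact h1.ne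
  right_eq := by
    have h1 := mul_lt_mul_of_pos_left (h.lt_of_right_lt (b + 1) b.lt_succ_self) hc
    rw [weighted_norm_coeff_X_sub_C_mul_succ_eq hc f α b, hα, h.right_eq, max_eq_left h1.le]
    rw [hα, h.right_eq]; exact h1.ne'
  lt_of_lt_left i hi := by
    cases i with
    | zero =>
      rw [weighted_norm_coeff_X_sub_C_mul_zero, hα]
      exact mul_lt_mul_of_pos_left (h.lt_of_lt_left 0 hi) hc
    | succ i =>
      refine (weighted_norm_coeff_X_sub_C_mul_succ_le hc f α i).trans_lt (max_lt ?_ ?_)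
      · exact mul_lt_mul_of_pos_left (h.lt_of_lt_left i (by omega)) hc
      · rw [hα]; exact mul_lt_mul_of_pos_left (h.lt_of_lt_left _ hi) hc
  lt_of_right_lt i hi := by
    cases i with
    | zero => omega
    | succ i =>
      refine (weighted_norm_coeff_X_sub_C_mul_succ_le hc f α i).trans_lt (max_lt ?_ ?_)
      · exact mul_lt_mul_of_pos_left (h.lt_of_right_lt i (by omega)) hc
      · rw [hα]; exact mul_lt_mul_of_pos_left (h.lt_of_right_lt _ (by omega)) hc

theorem IsNewtonSegment.X_sub_C_mul_of_norm_lt (hc : 0 < c) (h : IsNewtonSegment c f a b G)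
    {α : L} (hα : ‖α‖ < c) : IsNewtonSegment c ((X - C α) * f) (a + 1) (b + 1) (c * G) := by
  have small (i : ℕ) : ‖α‖ * (‖f.coeff i‖ * c ^ i) < c * G :=
    (mul_le_mul_of_nonneg_left (h.le i) (norm_nonneg α)).trans_lt
      (mul_lt_mul_of_pos_right hα h.pos)
  have eq (i : ℕ) (hi : ‖f.coeff i‖ * c ^ i = G) :
      ‖((X - C α) * f).coeff (i + 1)‖ * c ^ (i + 1) = c * G := by
    rw [weighted_norm_coeff_X_sub_C_mul_succ_eq hc f α i, hi, max_eq_left (small _).le]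
    rw [hi]; exact (small _).ne'
  have lt (i : ℕ) (hi : ‖f.coeff i‖ * c ^ i < G) :
      ‖((X - C α) * f).coeff (i + 1)‖ * c ^ (i + 1) < c * G :=
    (weighted_norm_coeff_X_sub_C_mul_succ_le hc f α i).trans_lt
      (max_lt (mul_lt_mul_of_pos_left hi hc) (small _))
  have lt_zero : ‖((X - C α) * f).coeff 0‖ * c ^ 0 < c * G := by
    rw [weighted_norm_coeff_X_sub_C_mul_zero]; exact small 0
  refine ⟨mul_pos hc h.pos, fun i ↦ ?_, eq a h.left_eq, eq b h.right_eq, fun i hi ↦ ?_,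
    fun i hi ↦ ?_⟩
  · cases i with
    | zero => exact lt_zero.le
    | succ i => exact (h.le i).lt_or_eq.elim (fun hi ↦ (lt i hi).le) (fun hi ↦ (eq i hi).le)
  · cases i with
    | zero => exact lt_zero
    | succ i => exact lt i (h.lt_of_lt_left i (by omega))
  · cases i with
    | zero => exact lt_zero
    | succ i => exact lt i (h.lt_of_right_lt i (by omega))

theorem IsNewtonSegment.X_sub_C_mul_of_lt_norm (hc : 0 < c) (h : IsNewtonSegment c f a b G)
    {α : L} (hα : c < ‖α‖) : IsNewtonSegment c ((X - C α) * f) a b (‖α‖ * G) := by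
  have hα0 : 0 < ‖α‖ := hc.trans hα
  have small (i : ℕ) : c * (‖f.coeff i‖ * c ^ i) < ‖α‖ * G :=
    (mul_le_mul_of_nonneg_left (h.le i) hc.le).trans_lt (mul_lt_mul_of_pos_right hα h.pos)
  have eq (i : ℕ) (hi : ‖f.coeff i‖ * c ^ i = G) :
      ‖((X - C α) * f).coeff i‖ * c ^ i = ‖α‖ * G := by
    cases i with
    | zero => rw [weighted_norm_coeff_X_sub_C_mul_zero, hi]
    | succ i =>
      rw [weighted_norm_coeff_X_sub_C_mul_succ_eq hc f α i, hi, max_eq_right (small _).le]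
      rw [hi]; exact (small _).ne
  have lt (i : ℕ) (hi : ‖f.coeff i‖ * c ^ i < G) :
      ‖((X - C α) * f).coeff i‖ * c ^ i < ‖α‖ * G := by
    cases i with
    | zero =>
      rw [weighted_norm_coeff_X_sub_C_mul_zero]; exact mul_lt_mul_of_pos_left hi hα0
    | succ i =>
      exact (weighted_norm_coeff_X_sub_C_mul_succ_le hc f α i).trans_lt
        (max_lt (small _) (mul_lt_mul_of_pos_left hi hα0))
  exact ⟨mul_pos hα0 h.pos,
    fun i ↦ (h.le i).lt_or_eq.elim (fun hi ↦ (lt i hi).le) (fun hi ↦ (eq i hi).le),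
    eq a h.left_eq, eq b h.right_eq, fun i hi ↦ lt i (h.lt_of_lt_left i hi),
    fun i hi ↦ lt i (h.lt_of_right_lt i hi)⟩

open Classical in
theorem exists_isNewtonSegment_C_mul_prod (hc : 0 < c) {x : L} (hx : x ≠ 0) (S : Multiset L) :
    ∃ a G, IsNewtonSegment c (C x * (S.map fun α ↦ X - C α).prod) a
      (a + (S.filter fun α ↦ ‖α‖ = c).card) G := by
  induction S using Multiset.induction_on with
  | empty => exact ⟨0, _, by simpa using isNewtonSegment_C c hx⟩
  | cons α S ih =>
    obtain ⟨a, G, h⟩ := ih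
    rw [Multiset.map_cons, Multiset.prod_cons, mul_left_comm]
    rcases lt_trichotomy ‖α‖ c with hα | hα | hα
    · refine ⟨a + 1, c * G, ?_⟩
      rw [Multiset.filter_cons_of_neg (p := fun α ↦ ‖α‖ = c) _ hα.ne, add_right_comm]
      exact h.X_sub_C_mul_of_norm_lt hc hα
    · refine ⟨a, c * G, ?_⟩
      rw [Multiset.filter_cons_of_pos (p := fun α ↦ ‖α‖ = c) _ hα, Multiset.card_cons, ← add_assoc]
      exact h.X_sub_C_mul_of_norm_eq hc hα
    · refine ⟨a, ‖α‖ * G, ?_⟩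
      rw [Multiset.filter_cons_of_neg (p := fun α ↦ ‖α‖ = c) _ hα.ne']
      exact h.X_sub_C_mul_of_lt_norm hc hα

open Classical in
theorem IsNewtonSegment.card_roots_filter_norm_eq (hc : 0 < c) (hf : f.Splits)
    (h : IsNewtonSegment c f a b G) : (f.roots.filter fun α ↦ ‖α‖ = c).card = b - a := by
  have hf0 : f ≠ 0 := by
    rintro rfl
    simpa [h.pos.ne] using h.left_eq
  obtain ⟨a', G', h'⟩ :=
    exists_isNewtonSegment_C_mul_prod hc (leadingCoeff_ne_zero.2 hf0) f.roots
  rw [← hf.eq_prod_roots] at h'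
  obtain ⟨rfl, rfl⟩ := h.unique h'
  omega

end Ultrametric

end NewtonSegment

section Galois

variable {K L : Type*} [Field K] [Field L] [Algebra K L]

theorem exists_map_eq_prod_roots_filter [IsGalois K L] {u : K[X]}
    (hu : (u.map (algebraMap K L)).Splits) (P : L → Prop) [DecidablePred P]
    (hP : ∀ (σ : Gal(L/K)) (x : L), P (σ x) ↔ P x) :
    ∃ a : K[X], a.map (algebraMap K L) =
      (((u.map (algebraMap K L)).roots.filter P).map fun α ↦ X - C α).prod := by
  rw [← mem_lifts, lifts_iff_coeff_lifts]
  intro n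
  rw [InfiniteGalois.mem_range_algebraMap_iff_fixed]
  intro σ
  have hroots : (u.map (algebraMap K L)).roots.map σ = (u.map (algebraMap K L)).roots := by
    have h := hu.roots_map (σ : L →+* L)
    rw [map_map, show (σ : L →+* L).comp (algebraMap K L) = algebraMap K L from
      RingHom.ext σ.commutes] at h
    exact h.symm
  have hfilter : ((u.map (algebraMap K L)).roots.filter P).map σ =
      (u.map (algebraMap K L)).roots.filter P := by
    conv_rhs => rw [← hroots, Multiset.filter_map]
    simp only [Function.comp_def, hP]
  have hprod := Polynomial.map_multiset_prod (σ : L →+* L)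
    (((u.map (algebraMap K L)).roots.filter P).map fun α ↦ X - C α)
  rw [Multiset.map_map] at hprod
  have hcomp : (Polynomial.map (σ : L →+* L) ∘ fun α ↦ X - C α) =
      (fun α ↦ X - C α) ∘ σ := by
    ext1 α; simp
  rw [hcomp, ← Multiset.map_map, hfilter] at hprod
  conv_rhs => rw [← hprod]
  rw [coeff_map]
  rfl

end Galois

section Padic

variable {p : ℕ} [Fact p.Prime]

theorem Padic.norm_eq_rpow_neg_valuation {x : ℚ_[p]} (hx : x ≠ 0) :
    ‖x‖ = (p : ℝ) ^ (-(x.valuation : ℝ)) := by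
  rw [Padic.norm_eq_zpow_neg_valuation hx, ← Real.rpow_intCast]
  push_cast; rfl

theorem spectralNorm_eq_rpow_neg_algClosurePadicVal {α : AlgebraicClosure ℚ_[p]} (hα : α ≠ 0) :
    spectralNorm ℚ_[p] (AlgebraicClosure ℚ_[p]) α =
      (p : ℝ) ^ (-(algClosurePadicVal p α : ℝ)) := by
  have h0 : (minpoly ℚ_[p] α).coeff 0 ≠ 0 :=
    minpoly.coeff_zero_ne_zero (Algebra.IsIntegral.isIntegral α) hα
  rw [spectralNorm.spectralNorm_eq_norm_coeff_zero_rpow, Padic.norm_eq_rpow_neg_valuation h0,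
    ← Real.rpow_mul (Nat.cast_nonneg p), algClosurePadicVal]
  congr 1
  push_cast
  ring

theorem algClosurePadicVal_eq_iff {α : AlgebraicClosure ℚ_[p]} (hα : α ≠ 0) (k : ℚ) :
    algClosurePadicVal p α = k ↔
      spectralNorm ℚ_[p] (AlgebraicClosure ℚ_[p]) α = (p : ℝ) ^ (-(k : ℝ)) := by
  have hp : (1 : ℝ) < p := mod_cast (Fact.out : p.Prime).one_lt
  rw [spectralNorm_eq_rpow_neg_algClosurePadicVal hα,
    Real.rpow_right_inj (by positivity) hp.ne', neg_inj, Rat.cast_inj]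

theorem Padic.norm_mul_rpow_pow {x : ℚ_[p]} (hx : x ≠ 0) (k : ℚ) (i : ℕ) :
    ‖x‖ * ((p : ℝ) ^ (-(k : ℝ))) ^ i = (p : ℝ) ^ (((-(x.valuation + k * i) : ℚ)) : ℝ) := by
  have hp : (0 : ℝ) < p := mod_cast (Fact.out : p.Prime).pos
  rw [Padic.norm_eq_rpow_neg_valuation hx, ← Real.rpow_mul_natCast hp.le, ← Real.rpow_add hp]
  congr 1
  push_cast
  ring

end Padic

open Polynomial Classical in
/-- If the Newton polygon of u (u_0 u_m ≠ 0) has a segment from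
(r, ν_p(u_r)) to (s, ν_p(u_s)) with slope −k, then u has exactly s − r roots of
valuation k in the algebraic closure of ℚ_p (with multiplicity), and the product of
(x − α) over these roots has coefficients in ℚ_p. -/
theorem stmt_12 (p : ℕ) [Fact p.Prime] (u : Polynomial ℚ_[p]) (m : ℕ)
    (hdeg : u.natDegree = m) (h0 : u.coeff 0 ≠ 0) (hm : u.coeff m ≠ 0)
    (r s : ℕ) (k : ℚ) (hrs : r < s) (hsm : s ≤ m)
    (hur : u.coeff r ≠ 0) (hus : u.coeff s ≠ 0)
    (hslope : ((u.coeff s).valuation : ℚ) - ((u.coeff r).valuation : ℚ)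
        = -k * ((s : ℚ) - (r : ℚ)))
    (habove : ∀ i ≤ m, u.coeff i ≠ 0 →
      ((u.coeff r).valuation : ℚ) - k * ((i : ℚ) - (r : ℚ)) ≤ ((u.coeff i).valuation : ℚ))
    (hstrict : ∀ i ≤ m, u.coeff i ≠ 0 → (i < r ∨ s < i) →
      ((u.coeff r).valuation : ℚ) - k * ((i : ℚ) - (r : ℚ)) < ((u.coeff i).valuation : ℚ)) :
    Multiset.card ((u.map (algebraMap ℚ_[p] (AlgebraicClosure ℚ_[p]))).roots.filter
        (fun α => algClosurePadicVal p α = k)) = s - r ∧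
    ∃ a : Polynomial ℚ_[p],
      a.map (algebraMap ℚ_[p] (AlgebraicClosure ℚ_[p]))
        = (((u.map (algebraMap ℚ_[p] (AlgebraicClosure ℚ_[p]))).roots.filter
            (fun α => algClosurePadicVal p α = k)).map
              (fun α => Polynomial.X - Polynomial.C α)).prod := by
  have hsplits : (u.map (algebraMap ℚ_[p] (AlgebraicClosure ℚ_[p]))).Splits :=
    IsAlgClosed.splits _
  refine ⟨?_, exists_map_eq_prod_roots_filter hsplits _ fun σ x ↦ ?_⟩
  · let : NormedField (AlgebraicClosure ℚ_[p]) := spectralNorm.normedField ℚ_[p] _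
    have : IsUltrametricDist (AlgebraicClosure ℚ_[p]) :=
      IsUltrametricDist.isUltrametricDist_of_isNonarchimedean_norm isNonarchimedean_spectralNorm
    have hp : (1 : ℝ) < p := mod_cast (Fact.out : p.Prime).one_lt
    have hp0 : (0 : ℝ) < p := one_pos.trans hp
    have hc : (0 : ℝ) < (p : ℝ) ^ (-(k : ℝ)) := by positivity
    have hnorm (x : ℚ_[p]) : ‖algebraMap ℚ_[p] (AlgebraicClosure ℚ_[p]) x‖ = ‖x‖ :=
      spectralNorm_extends x
    have hzero (i : ℕ) (hi : u.coeff i = 0) : ‖u.coeff i‖ * ((p : ℝ) ^ (-(k : ℝ))) ^ i <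
        (p : ℝ) ^ (((-((u.coeff r).valuation + k * r) : ℚ)) : ℝ) := by
      rw [hi, norm_zero, zero_mul]; positivity
    have hdegree (i : ℕ) (hi : u.coeff i ≠ 0) : i ≤ m := hdeg ▸ le_natDegree_of_ne_zero hi
    have hlt (i : ℕ) (hi : i < r ∨ s < i) : ‖u.coeff i‖ * ((p : ℝ) ^ (-(k : ℝ))) ^ i <
        (p : ℝ) ^ (((-((u.coeff r).valuation + k * r) : ℚ)) : ℝ) := by
      by_cases h : u.coeff i = 0
      · exact hzero i h
      rw [Padic.norm_mul_rpow_pow h, Real.rpow_lt_rpow_left_iff hp, Rat.cast_lt]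
      linarith [hstrict i (hdegree i h) h hi]
    have hseg : IsNewtonSegment ((p : ℝ) ^ (-(k : ℝ)))
        (u.map (algebraMap ℚ_[p] (AlgebraicClosure ℚ_[p]))) r s
        ((p : ℝ) ^ (((-((u.coeff r).valuation + k * r) : ℚ)) : ℝ)) := by
      refine ⟨by positivity, fun i ↦ ?_, ?_, ?_, fun i hi ↦ ?_, fun i hi ↦ ?_⟩ <;>
        rw [coeff_map, hnorm]
      · by_cases h : u.coeff i = 0
        · exact (hzero i h).le
        rw [Padic.norm_mul_rpow_pow h, Real.rpow_le_rpow_left_iff hp, Rat.cast_le]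
        linarith [habove i (hdegree i h) h]
      · exact Padic.norm_mul_rpow_pow hur k r
      · rw [Padic.norm_mul_rpow_pow hus]
        congr 2
        linarith
      · exact hlt i (.inl hi)
      · exact hlt i (.inr hi)
    rw [← hseg.card_roots_filter_norm_eq hc hsplits]
    congr 1
    refine Multiset.filter_congr fun α hα ↦ algClosurePadicVal_eq_iff ?_ k
    rintro rfl
    have h := (mem_roots'.1 hα).2
    rw [IsRoot, ← coeff_zero_eq_eval_zero, coeff_map] at h
    exact h0 ((map_eq_zero _).1 h)
  · simp only [algClosurePadicVal, minpoly.algEquiv_eq]
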